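/- arXiv:1604.03220 — 3 statements merged into one kernel-verified Lean document; each statement's English description precedes it below -/
import Mathlib

section
/- Second de Casteljau algorithm for (p,q)-Bézier curves: let n ≥ 1, let p, q be reals with 0 < q < p, let d ≥ 1, and let P_0, …, P_n ∈ ℝ^d. Fix a real t and define recursively R_i^0 = P_i for i = 0, …, n, and R_i^k = q^i (p^{n−k−i} − q^{n−k−i} t) R_i^{k−1} + p^{n−k} t R_{i+1}^{k−1} for k = 1, …, n and i = 0, …, n−k. Then R_0^n = p^{n(n−1)/2} Σ_{i=0}^{n} P_i B_i^n(t;p,q). -/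
/-- The (p,q)-integer `[n]_{p,q} = Σ_{j=0}^{n-1} p^{n-1-j} q^j`. -/
noncomputable def pqInt (p q : ℝ) (n : ℕ) : ℝ :=
  ∑ j ∈ Finset.range n, p ^ (n - 1 - j) * q ^ j

/-- The (p,q)-factorial `[n]_{p,q}! = ∏_{j=1}^{n} [j]_{p,q}`. -/
noncomputable def pqFact (p q : ℝ) : ℕ → ℝ
  | 0 => 1
  | n + 1 => pqFact p q n * pqInt p q (n + 1)

/-- The (p,q)-binomial coefficient `[n choose k]_{p,q}`. -/
noncomputable def pqBinom (p q : ℝ) (n k : ℕ) : ℝ :=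
  pqFact p q n / (pqFact p q k * pqFact p q (n - k))

/-- The (p,q)-Bernstein basis function
`B_k^n(t;p,q) = p^{k(k-1)/2 - n(n-1)/2} [n choose k]_{p,q} t^k ∏_{s=0}^{n-k-1} (p^s - q^s t)`. -/
noncomputable def pqBernstein (p q : ℝ) (n k : ℕ) (t : ℝ) : ℝ :=
  p ^ (k * (k - 1) / 2) / p ^ (n * (n - 1) / 2) * pqBinom p q n k * t ^ k *
    ∏ s ∈ Finset.range (n - k), (p ^ s - q ^ s * t)

/-!
The algorithm is run backwards: `R n 0` is a combination of the points of each intermediate level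
`R (n - m)`, with coefficients depending only on `m` and `i`. Eliminating one more level turns the
coefficients of stage `m` into those of stage `m + 1`, and the resulting triangular recurrence is
the (p,q)-Pascal rule multiplied by the power of `p`, the power of `t` and the product that occur in
the Bernstein basis. Thus the coefficients of stage `m` are `p^{m(m-1)/2} B_i^m(t;p,q)`.
-/

lemma pqInt_add (p q : ℝ) (m n : ℕ) :
    pqInt p q (m + n) = q ^ m * pqInt p q n + p ^ n * pqInt p q m := by
  simp only [pqInt, Finset.sum_range_add, Finset.mul_sum]
  rw [add_comm]
  congr 1 <;> refine Finset.sum_congr rfl fun j hj => ?_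
  · rw [show m + n - 1 - (m + j) = n - 1 - j by lia]
    ring
  · have hjm : j < m := Finset.mem_range.1 hj
    rw [show m + n - 1 - j = n + (m - 1 - j) by lia]
    ring

lemma pqInt_mul_sub (p q : ℝ) (n : ℕ) : pqInt p q n * (p - q) = p ^ n - q ^ n := by
  rw [← neg_sub q p, mul_neg, ← neg_sub (q ^ n), ← geom_sum₂_mul]
  simp only [pqInt, mul_comm]

lemma pqFact_zero (p q : ℝ) : pqFact p q 0 = 1 := rfl

lemma pqFact_succ (p q : ℝ) (n : ℕ) :
    pqFact p q (n + 1) = pqFact p q n * pqInt p q (n + 1) := rfl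

section PQCalculus

variable {p q : ℝ}

lemma pqInt_ne_zero (hpq : p + q ≠ 0) {n : ℕ} (hn : n ≠ 0) : pqInt p q n ≠ 0 := by
  obtain rfl | hne := eq_or_ne p q
  · have hp : p ≠ 0 := fun h => hpq (by simp [h])
    rw [pqInt, Finset.sum_congr rfl fun j _ => mul_comm _ _, geom_sum₂_self]
    exact mul_ne_zero (Nat.cast_ne_zero.2 hn) (pow_ne_zero _ hp)
  · intro h
    have hpow : p ^ n = q ^ n := by
      rw [← sub_eq_zero, ← pqInt_mul_sub, h, zero_mul]
    rcases pow_eq_pow_iff_cases.1 hpow with h | h | ⟨h, -⟩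
    · exact hn h
    · exact hne h
    · exact hpq (by simp [h])

lemma pqFact_ne_zero (hpq : p + q ≠ 0) (n : ℕ) : pqFact p q n ≠ 0 := by
  induction n with
  | zero => exact one_ne_zero
  | succ n ih => exact mul_ne_zero ih (pqInt_ne_zero hpq n.succ_ne_zero)

lemma pqBinom_zero_right (hpq : p + q ≠ 0) (n : ℕ) : pqBinom p q n 0 = 1 := by
  simp [pqBinom, pqFact_zero, pqFact_ne_zero hpq]

lemma pqBinom_self (hpq : p + q ≠ 0) (n : ℕ) : pqBinom p q n n = 1 := by
  simp [pqBinom, pqFact_zero, pqFact_ne_zero hpq]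

lemma pqBinom_succ_succ (hpq : p + q ≠ 0) {n k : ℕ} (hk : k < n) :
    pqBinom p q (n + 1) (k + 1) =
      q ^ (k + 1) * pqBinom p q n (k + 1) + p ^ (n - k) * pqBinom p q n k := by
  obtain ⟨j, rfl⟩ := Nat.exists_eq_add_of_lt hk
  have hsplit : pqInt p q (k + j + 1 + 1) =
      q ^ (k + 1) * pqInt p q (j + 1) + p ^ (j + 1) * pqInt p q (k + 1) := by
    rw [← pqInt_add, show k + j + 1 + 1 = k + 1 + (j + 1) by ring]
  have hk_fact := pqFact_ne_zero hpq k
  have hj_fact := pqFact_ne_zero hpq j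
  have hk_int := pqInt_ne_zero hpq k.succ_ne_zero
  have hj_int := pqInt_ne_zero hpq j.succ_ne_zero
  simp only [pqBinom, show k + j + 1 + 1 - (k + 1) = j + 1 by lia,
    show k + j + 1 - (k + 1) = j by lia, show k + j + 1 - k = j + 1 by lia]
  rw [pqFact_succ p q (k + j + 1), hsplit, pqFact_succ p q k, pqFact_succ p q j]
  field_simp

end PQCalculus

/-- The Bernstein basis function scaled by `p^{n(n-1)/2}`, as the polynomial
`p^{k(k-1)/2} [n choose k]_{p,q} t^k ∏_{s=0}^{n-k-1} (p^s - q^s t)`. These are the coefficients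
produced by the second de Casteljau algorithm. -/
noncomputable def pqBernsteinScaled (p q : ℝ) (n k : ℕ) (t : ℝ) : ℝ :=
  p ^ (k * (k - 1) / 2) * pqBinom p q n k * t ^ k * ∏ s ∈ Finset.range (n - k), (p ^ s - q ^ s * t)

section Bernstein

variable {p q : ℝ}

lemma pqBernsteinScaled_eq_mul_pqBernstein (hp : p ≠ 0) (n k : ℕ) (t : ℝ) :
    pqBernsteinScaled p q n k t = p ^ (n * (n - 1) / 2) * pqBernstein p q n k t := by
  have hpow : p ^ (n * (n - 1) / 2) ≠ 0 := pow_ne_zero _ hp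
  simp only [pqBernsteinScaled, pqBernstein, ← mul_assoc, mul_div_cancel₀ _ hpow]

lemma pqBernsteinScaled_succ_zero (hpq : p + q ≠ 0) (n : ℕ) (t : ℝ) :
    pqBernsteinScaled p q (n + 1) 0 t = pqBernsteinScaled p q n 0 t * (p ^ n - q ^ n * t) := by
  simp [pqBernsteinScaled, pqBinom_zero_right hpq, Finset.prod_range_succ]

lemma pqBernsteinScaled_succ_self (hpq : p + q ≠ 0) (n : ℕ) (t : ℝ) :
    pqBernsteinScaled p q (n + 1) (n + 1) t = pqBernsteinScaled p q n n t * (p ^ n * t) := by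
  simp only [pqBernsteinScaled, pqBinom_self hpq, Nat.triangle_succ, Nat.sub_self]
  ring

lemma pqBernsteinScaled_succ_succ (hpq : p + q ≠ 0) {n k : ℕ} (hk : k < n) (t : ℝ) :
    pqBernsteinScaled p q (n + 1) (k + 1) t =
      pqBernsteinScaled p q n (k + 1) t *
        (q ^ (k + 1) * (p ^ (n - (k + 1)) - q ^ (n - (k + 1)) * t)) +
      pqBernsteinScaled p q n k t * (p ^ n * t) := by
  simp only [pqBernsteinScaled, pqBinom_succ_succ hpq hk, Nat.triangle_succ]
  obtain ⟨j, rfl⟩ := Nat.exists_eq_add_of_lt hk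
  rw [show k + j + 1 + 1 - (k + 1) = j + 1 by lia, show k + j + 1 - (k + 1) = j by lia,
    show k + j + 1 - k = j + 1 by lia, Finset.prod_range_succ]
  ring

end Bernstein

section DeCasteljau

variable {V : Type*} [AddCommMonoid V] [Module ℝ V] {p q : ℝ}

lemma sum_pqBernsteinScaled_smul_step (hpq : p + q ≠ 0) (n : ℕ) (t : ℝ) (x : ℕ → V) :
    ∑ i ∈ Finset.range (n + 1), pqBernsteinScaled p q n i t •
        ((q ^ i * (p ^ (n - i) - q ^ (n - i) * t)) • x i + (p ^ n * t) • x (i + 1)) =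
      ∑ i ∈ Finset.range (n + 2), pqBernsteinScaled p q (n + 1) i t • x i := by
  have hinner : ∑ i ∈ Finset.range n, pqBernsteinScaled p q (n + 1) (i + 1) t • x (i + 1) =
      ∑ i ∈ Finset.range n, (pqBernsteinScaled p q n (i + 1) t *
          (q ^ (i + 1) * (p ^ (n - (i + 1)) - q ^ (n - (i + 1)) * t))) • x (i + 1) +
        ∑ i ∈ Finset.range n, (pqBernsteinScaled p q n i t * (p ^ n * t)) • x (i + 1) := by
    rw [← Finset.sum_add_distrib]
    refine Finset.sum_congr rfl fun i hi => ?_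
    rw [pqBernsteinScaled_succ_succ hpq (Finset.mem_range.1 hi), add_smul]
  simp only [smul_add, smul_smul, Finset.sum_add_distrib]
  rw [Finset.sum_range_succ', Finset.sum_range_succ _ n, Finset.sum_range_succ' _ (n + 1),
    Finset.sum_range_succ _ n, hinner, pqBernsteinScaled_succ_zero hpq,
    pqBernsteinScaled_succ_self hpq, pow_zero, one_mul, Nat.sub_zero]
  abel

lemma deCasteljau_eq_sum_pqBernsteinScaled_smul (hpq : p + q ≠ 0) {n : ℕ} {t : ℝ}
    {R : ℕ → ℕ → V}
    (hR : ∀ k, 1 ≤ k → k ≤ n → ∀ i ≤ n - k,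
      R k i = (q ^ i * (p ^ (n - k - i) - q ^ (n - k - i) * t)) • R (k - 1) i +
        (p ^ (n - k) * t) • R (k - 1) (i + 1))
    {m : ℕ} (hm : m ≤ n) :
    R n 0 = ∑ i ∈ Finset.range (m + 1), pqBernsteinScaled p q m i t • R (n - m) i := by
  induction m with
  | zero => simp [pqBernsteinScaled, pqBinom_self hpq]
  | succ m ih =>
    rw [ih (by lia), ← sum_pqBernsteinScaled_smul_step hpq]
    refine Finset.sum_congr rfl fun i hi => ?_
    have him : i < m + 1 := Finset.mem_range.1 hi
    rw [hR (n - m) (by lia) (by lia) i (by lia), Nat.sub_sub_self (by lia), Nat.sub_sub]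

theorem pq_deCasteljau_second_general (hp : p ≠ 0) (hpq : p + q ≠ 0) {n : ℕ} {t : ℝ}
    {P : ℕ → V} {R : ℕ → ℕ → V} (hR0 : ∀ i ≤ n, R 0 i = P i)
    (hR : ∀ k, 1 ≤ k → k ≤ n → ∀ i ≤ n - k,
      R k i = (q ^ i * (p ^ (n - k - i) - q ^ (n - k - i) * t)) • R (k - 1) i +
        (p ^ (n - k) * t) • R (k - 1) (i + 1)) :
    R n 0 = (p ^ (n * (n - 1) / 2) : ℝ) •
      ∑ i ∈ Finset.range (n + 1), pqBernstein p q n i t • P i := by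
  rw [deCasteljau_eq_sum_pqBernsteinScaled_smul hpq hR le_rfl, Finset.smul_sum]
  refine Finset.sum_congr rfl fun i hi => ?_
  rw [Nat.sub_self, hR0 i (Finset.mem_range_succ_iff.1 hi),
    pqBernsteinScaled_eq_mul_pqBernstein hp, smul_smul]

end DeCasteljau

/-- the second de Casteljau algorithm for (p,q)-Bézier curves.
With `R_i^0 = P_i` and
`R_i^k = q^i (p^{n-k-i} - q^{n-k-i} t) R_i^{k-1} + p^{n-k} t R_{i+1}^{k-1}`,
one has `R_0^n = p^{n(n-1)/2} Σ_{i=0}^{n} P_i B_i^n(t;p,q)`. -/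
theorem pq_deCasteljau_second (n d : ℕ) (hn : 1 ≤ n) (hd : 1 ≤ d)
    (p q : ℝ) (h0 : 0 < q) (hqp : q < p)
    (P : ℕ → Fin d → ℝ) (t : ℝ) (R : ℕ → ℕ → Fin d → ℝ)
    (hR0 : ∀ i ≤ n, R 0 i = P i)
    (hR : ∀ k, 1 ≤ k → k ≤ n → ∀ i ≤ n - k,
      R k i = (q ^ i * (p ^ (n - k - i) - q ^ (n - k - i) * t)) • R (k - 1) i +
        (p ^ (n - k) * t) • R (k - 1) (i + 1)) :
    R n 0 = (p ^ (n * (n - 1) / 2) : ℝ) •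
      ∑ i ∈ Finset.range (n + 1), pqBernstein p q n i t • P i :=
  pq_deCasteljau_second_general (h0.trans hqp).ne' (add_pos (h0.trans hqp) h0).ne' hR0 hR
end

section
/- Existence and uniqueness of the (p,q)-blossom: let n ≥ 1 and let p, q be reals with 0 < q < p. For every real polynomial S of degree at most n, there exists a unique symmetric multiaffine function s : ℝ^n → ℝ such that s(p^{n−1}t, p^{n−2}q t, …, q^{n−1}t) = S(t) for all real t (the i-th diagonal argument being p^{n−i} q^{i−1} t). -/
/-- The `k`-th elementary symmetric polynomial in `n` variables:
`φ_{n,k}(u_1, …, u_n) = Σ_{1 ≤ i_1 < … < i_k ≤ n} u_{i_1} ⋯ u_{i_k}`. -/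
noncomputable def esymmEval (n k : ℕ) (u : Fin n → ℝ) : ℝ :=
  ∑ S ∈ Finset.powersetCard k (Finset.univ : Finset (Fin n)), ∏ i ∈ S, u i

/-- A function `f : ℝ^n → ℝ` is symmetric if it is invariant under all permutations
of its arguments. -/
def IsSymmetricFn (n : ℕ) (f : (Fin n → ℝ) → ℝ) : Prop :=
  ∀ (σ : Equiv.Perm (Fin n)) (u : Fin n → ℝ), f (fun i => u (σ i)) = f u

/-- A function `f : ℝ^n → ℝ` is multiaffine if, fixing all variables except the `j`-th,
the resulting one-variable function is affine (degree at most one). -/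
def IsMultiaffine (n : ℕ) (f : (Fin n → ℝ) → ℝ) : Prop :=
  ∀ (j : Fin n) (u : Fin n → ℝ), ∃ a b : ℝ,
    ∀ x : ℝ, f (Function.update u j x) = a * x + b

/-!
Symmetric multiaffine functions of `n` variables are exactly the combinations `∑ k ≤ n, c k * e_k`
of the elementary symmetric functions. Indeed such a function is determined by its values on 0-1
vectors, by symmetry those values depend only on the number `m` of ones, and `e_k` takes the value
`m.choose k` there, so Newton's forward difference formula supplies the `c k`. Along a line `l * t`
through the origin the combination becomes the polynomial `∑ k ≤ n, c k * e_k(l) * t ^ k`; hence,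
when every `e_k(l)` is invertible, prescribing that polynomial amounts to prescribing the `c k`.
For the `(p,q)`-diagonal each `e_k(l)` is a nonempty sum of products of positive numbers.
-/

open Finset MvPolynomial

variable {ι R : Type*}

/-- A function of the family `u : ι → α` invariant under permutations of its arguments; for
`ι = Fin n` and `α = β = ℝ` this unfolds to `IsSymmetricFn n f`. -/
def IsSymmetricMap {α β : Type*} (f : (ι → α) → β) : Prop :=
  ∀ (σ : Equiv.Perm ι) (u : ι → α), f (u ∘ σ) = f u

/-- A function of the family `u : ι → R` that is affine in each argument separately; for `ι = Fin n`
and `R = ℝ` this unfolds to `IsMultiaffine n f`. -/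
def IsMultiaffineMap [DecidableEq ι] [Semiring R] (f : (ι → R) → R) : Prop :=
  ∀ (j : ι) (u : ι → R), ∃ a b : R, ∀ x : R, f (Function.update u j x) = a * x + b

section ZeroOneVectors

variable [DecidableEq ι]

theorem IsSymmetricMap.apply_piecewise_const_eq_of_card_eq {α β : Type*} {f : (ι → α) → β}
    (hf : IsSymmetricMap f) (x y : α) {A B : Finset ι} (h : #A = #B) :
    f (A.piecewise (fun _ => x) fun _ => y) = f (B.piecewise (fun _ => x) fun _ => y) := by
  obtain ⟨σ, rfl⟩ := Equiv.Perm.exists_map_finset_eq A B h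
  rw [← hf σ ((A.map σ.toEmbedding).piecewise _ _)]
  congr 1
  ext i
  simp [Finset.piecewise]

variable [CommRing R] {f g : (ι → R) → R}

theorem IsMultiaffineMap.apply_update (hf : IsMultiaffineMap f) (j : ι) (u : ι → R) (x : R) :
    f (Function.update u j x) =
      (1 - x) * f (Function.update u j 0) + x * f (Function.update u j 1) := by
  obtain ⟨a, b, h⟩ := hf j u
  simp only [h]
  ring

theorem IsMultiaffineMap.ext_piecewise_one_zero [Finite ι] (hf : IsMultiaffineMap f)
    (hg : IsMultiaffineMap g)
    (h : ∀ A : Finset ι, f (A.piecewise 1 0) = g (A.piecewise 1 0)) : f = g := by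
  have := Fintype.ofFinite ι
  have agree (u : ι → R) (B : Finset ι) : ∀ A : Finset ι,
      f (B.piecewise u (A.piecewise 1 0)) = g (B.piecewise u (A.piecewise 1 0)) := by
    induction B using Finset.induction_on with
    | empty => simpa only [piecewise_empty] using h
    | insert j B hj ih =>
      intro A
      have h_zero : Function.update (A.piecewise 1 0 : ι → R) j 0 =
          (A.erase j).piecewise (1 : ι → R) 0 := by
        ext i
        by_cases hi : i = j <;> simp [Finset.piecewise, hi]
      have h_one : Function.update (A.piecewise 1 0 : ι → R) j 1 =
          (insert j A).piecewise (1 : ι → R) 0 :=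
        (piecewise_insert A (1 : ι → R) 0 j).symm
      rw [piecewise_insert, hf.apply_update, hg.apply_update]
      simp only [update_piecewise_of_notMem _ _ _ hj, h_zero, h_one, ih]
  ext u
  simpa only [piecewise_univ] using agree u univ ∅

end ZeroOneVectors

section MultiaffineClosure

variable [DecidableEq ι] [CommSemiring R]

theorem IsMultiaffineMap.const_mul {f : (ι → R) → R} (hf : IsMultiaffineMap f) (c : R) :
    IsMultiaffineMap fun u => c * f u := by
  intro j u
  obtain ⟨a, b, h⟩ := hf j u
  exact ⟨c * a, c * b, fun x => by simp only [h]; ring⟩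

theorem IsMultiaffineMap.sum {κ : Type*} (s : Finset κ) {f : κ → (ι → R) → R}
    (hf : ∀ k, IsMultiaffineMap (f k)) : IsMultiaffineMap fun u => ∑ k ∈ s, f k u := by
  intro j u
  choose a b h using fun k => hf k j u
  exact ⟨∑ k ∈ s, a k, ∑ k ∈ s, b k, fun x => by simp only [h, sum_add_distrib, sum_mul]⟩

theorem isMultiaffineMap_prod (A : Finset ι) : IsMultiaffineMap fun u : ι → R => ∏ i ∈ A, u i := by
  intro j u
  by_cases hj : j ∈ A
  · exact ⟨∏ i ∈ A \ {j}, u i, 0, fun x => by simp only [prod_update_of_mem hj]; ring⟩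
  · exact ⟨0, ∏ i ∈ A, u i, fun x => by simp only [prod_update_of_notMem hj]; ring⟩

end MultiaffineClosure

section ElementarySymmetric

variable [Fintype ι]

theorem eval_esymm_eq_sum_prod [CommSemiring R] (k : ℕ) (u : ι → R) :
    eval u (esymm ι R k) = ∑ A ∈ powersetCard k univ, ∏ i ∈ A, u i := by
  simp only [esymm, map_sum, map_prod, eval_X]

theorem eval_esymm_mul_const [CommSemiring R] (k : ℕ) (l : ι → R) (t : R) :
    eval (fun i => l i * t) (esymm ι R k) = eval l (esymm ι R k) * t ^ k := by
  rw [eval_esymm_eq_sum_prod, eval_esymm_eq_sum_prod, sum_mul]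
  refine sum_congr rfl fun A hA => ?_
  rw [prod_mul_distrib, prod_const, (mem_powersetCard.1 hA).2]

theorem eval_esymm_piecewise_one_zero [DecidableEq ι] [CommSemiring R] (k : ℕ) (A : Finset ι) :
    eval (A.piecewise 1 0) (esymm ι R k) = (#A).choose k := by
  have h_prod (B : Finset ι) :
      ∏ i ∈ B, (A.piecewise 1 0 : ι → R) i = if B ⊆ A then 1 else 0 := by
    simp [Finset.piecewise, prod_boole, subset_iff]
  have h_filter : ({B ∈ powersetCard k univ | B ⊆ A} : Finset (Finset ι)) = powersetCard k A := by
    ext B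
    simp [mem_powersetCard, and_comm]
  simp only [eval_esymm_eq_sum_prod, h_prod, sum_boole, h_filter, card_powersetCard]

theorem eval_esymm_pos [CommSemiring R] [PartialOrder R] [IsStrictOrderedRing R] {l : ι → R}
    (hl : ∀ i, 0 < l i) {k : ℕ} (hk : k ≤ Fintype.card ι) : 0 < eval l (esymm ι R k) := by
  rw [eval_esymm_eq_sum_prod]
  exact sum_pos (fun A _ => prod_pos fun i _ => hl i) (powersetCard_nonempty.2 hk)

theorem isSymmetricMap_eval_esymm [CommSemiring R] (k : ℕ) :
    IsSymmetricMap fun u : ι → R => eval u (esymm ι R k) := by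
  intro σ u
  simp only [← eval_rename, rename_esymm]

theorem isMultiaffineMap_eval_esymm [DecidableEq ι] [CommSemiring R] (k : ℕ) :
    IsMultiaffineMap fun u : ι → R => eval u (esymm ι R k) := by
  simpa only [eval_esymm_eq_sum_prod] using IsMultiaffineMap.sum _ isMultiaffineMap_prod

end ElementarySymmetric

section EsymmCombination

variable [Fintype ι] [CommSemiring R]

/-- The combination `∑ k ≤ |ι|, c k * e_k` of the elementary symmetric functions on `ι → R`, the
general form of a symmetric multiaffine function. The values `c k` with `k > |ι|` are ignored. -/
noncomputable def esymmCombination (c : ℕ → R) (u : ι → R) : R :=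
  ∑ k ∈ range (Fintype.card ι + 1), c k * eval u (esymm ι R k)

theorem isSymmetricMap_esymmCombination (c : ℕ → R) :
    IsSymmetricMap (esymmCombination (ι := ι) c) := fun σ u =>
  sum_congr rfl fun k _ => congrArg (c k * ·) (isSymmetricMap_eval_esymm k σ u)

theorem isMultiaffineMap_esymmCombination [DecidableEq ι] (c : ℕ → R) :
    IsMultiaffineMap (esymmCombination (ι := ι) c) :=
  IsMultiaffineMap.sum _ fun k => (isMultiaffineMap_eval_esymm k).const_mul (c k)

theorem esymmCombination_congr {c d : ℕ → R} (h : ∀ k ≤ Fintype.card ι, c k = d k) :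
    esymmCombination (ι := ι) c = esymmCombination d := by
  ext u
  exact sum_congr rfl fun k hk => by rw [h k (mem_range_succ_iff.1 hk)]

theorem esymmCombination_mul_const (c : ℕ → R) (l : ι → R) (t : R) :
    esymmCombination c (fun i => l i * t) =
      ∑ k ∈ range (Fintype.card ι + 1), c k * eval l (esymm ι R k) * t ^ k := by
  simp only [esymmCombination, eval_esymm_mul_const, mul_assoc]

end EsymmCombination

section NewtonExpansion

variable [Fintype ι] [DecidableEq ι] [CommRing R]

theorem esymmCombination_fwdDiff_piecewise_one_zero (v : ℕ → R) (A : Finset ι) :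
    esymmCombination (fun k => (fwdDiff 1)^[k] v 0) (A.piecewise 1 0) = v #A := by
  have newton : v #A = ∑ k ∈ range (#A + 1), (#A).choose k • (fwdDiff 1)^[k] v 0 := by
    simpa using shift_eq_sum_fwdDiff_iter 1 v #A 0
  rw [newton, esymmCombination]
  simp only [eval_esymm_piecewise_one_zero, nsmul_eq_mul, mul_comm ((fwdDiff 1)^[_] v 0)]
  refine (sum_subset (range_subset_range.2 (by gcongr; exact card_le_univ A)) ?_).symm
  intro k _ hk
  rw [Nat.choose_eq_zero_of_lt (by simpa using hk), Nat.cast_zero, zero_mul]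

theorem IsMultiaffineMap.exists_eq_esymmCombination {f : (ι → R) → R}
    (hf : IsMultiaffineMap f) (hsymm : IsSymmetricMap f) : ∃ c, f = esymmCombination c := by
  have factors : (fun A : Finset ι => f (A.piecewise 1 0)).FactorsThrough card := fun _ _ h =>
    hsymm.apply_piecewise_const_eq_of_card_eq 1 0 h
  obtain ⟨v, hv⟩ := (Function.factorsThrough_iff _).1 factors
  refine ⟨fun k => (fwdDiff 1)^[k] v 0,
    hf.ext_piecewise_one_zero (isMultiaffineMap_esymmCombination _) fun A => ?_⟩
  rw [esymmCombination_fwdDiff_piecewise_one_zero]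
  exact congrFun hv A

end NewtonExpansion

section Blossom

theorem forall_sum_range_eq_eval_iff [CommRing R] [IsDomain R] [Infinite R] {n : ℕ} (a : ℕ → R)
    {S : Polynomial R} (hS : S.natDegree ≤ n) :
    (∀ t, ∑ k ∈ range (n + 1), a k * t ^ k = S.eval t) ↔ ∀ k ≤ n, a k = S.coeff k := by
  refine ⟨fun h k hk => ?_, fun h t => ?_⟩
  · have hP : ∑ k ∈ range (n + 1), Polynomial.C (a k) * Polynomial.X ^ k = S :=
      Polynomial.funext fun t => by simpa [Polynomial.eval_finsetSum] using h t
    simp [← hP, Polynomial.finsetSum_coeff, Polynomial.coeff_X_pow, Nat.lt_succ_of_le hk]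
  · rw [Polynomial.eval_eq_sum_range' (Nat.lt_succ_of_le hS)]
    exact sum_congr rfl fun k hk => by rw [h k (mem_range_succ_iff.1 hk)]

variable [Fintype ι] [CommRing R] [IsDomain R] [Infinite R] {S : Polynomial R}

theorem esymmCombination_mul_const_eq_eval_iff (c : ℕ → R) (l : ι → R)
    (hS : S.natDegree ≤ Fintype.card ι) :
    (∀ t, esymmCombination c (fun i => l i * t) = S.eval t) ↔
      ∀ k ≤ Fintype.card ι, c k * eval l (esymm ι R k) = S.coeff k := by
  simp only [esymmCombination_mul_const]
  exact forall_sum_range_eq_eval_iff _ hS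

theorem pq_blossom_exists_unique_general [DecidableEq ι] (l : ι → R)
    (hl : ∀ k ≤ Fintype.card ι, IsUnit (eval l (esymm ι R k)))
    (hS : S.natDegree ≤ Fintype.card ι) :
    ∃! s : (ι → R) → R,
      IsSymmetricMap s ∧ IsMultiaffineMap s ∧ ∀ t : R, s (fun i => l i * t) = S.eval t := by
  let c : ℕ → R := fun k => S.coeff k * Ring.inverse (eval l (esymm ι R k))
  have hc : ∀ k ≤ Fintype.card ι, c k * eval l (esymm ι R k) = S.coeff k := fun k hk =>
    Ring.inverse_mul_cancel_right _ _ (hl k hk)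
  refine ⟨esymmCombination c, ⟨isSymmetricMap_esymmCombination c,
    isMultiaffineMap_esymmCombination c,
    (esymmCombination_mul_const_eq_eval_iff c l hS).2 hc⟩, ?_⟩
  rintro s ⟨hsymm, haff, hdiag⟩
  obtain ⟨d, rfl⟩ := haff.exists_eq_esymmCombination hsymm
  have hd := (esymmCombination_mul_const_eq_eval_iff d l hS).1 hdiag
  exact esymmCombination_congr fun k hk =>
    (hl k hk).mul_right_cancel ((hd k hk).trans (hc k hk).symm)

end Blossom

/-- existence and uniqueness of the (p,q)-blossom.  For every real polynomial
`S` of degree at most `n` there is a unique symmetric multiaffine function `s : ℝ^n → ℝ`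
reducing to `S` along the (p,q)-diagonal. -/
theorem pq_blossom_exists_unique (n : ℕ) (hn : 1 ≤ n)
    (p q : ℝ) (h0 : 0 < q) (hqp : q < p)
    (S : Polynomial ℝ) (hS : S.natDegree ≤ n) :
    ∃! s : (Fin n → ℝ) → ℝ,
      IsSymmetricFn n s ∧ IsMultiaffine n s ∧
        ∀ t : ℝ, s (fun i => p ^ (n - 1 - (i : ℕ)) * q ^ (i : ℕ) * t) = S.eval t := by
  have hp : 0 < p := h0.trans hqp
  exact pq_blossom_exists_unique_general (fun i : Fin n => p ^ (n - 1 - (i : ℕ)) * q ^ (i : ℕ))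
    (fun k hk => (eval_esymm_pos (fun i => by positivity) hk).ne'.isUnit) (by simpa using hS)
end

section
/- The (p,q)-Bernstein functions form a basis: let n ≥ 1 and let p, q be reals with 0 < q < p. Then the polynomials B_0^n(·;p,q), B_1^n(·;p,q), …, B_n^n(·;p,q) form a basis of the real vector space of polynomials of degree at most n; in particular, they are linearly independent and every real polynomial of degree at most n is a unique real linear combination of them. -/
/-- The (p,q)-Bernstein basis function `B_k^n(·;p,q)` as a polynomial in `ℝ[X]`. -/
noncomputable def pqBernsteinPoly (p q : ℝ) (n k : ℕ) : Polynomial ℝ :=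
  Polynomial.C (p ^ (k * (k - 1) / 2) / p ^ (n * (n - 1) / 2) * pqBinom p q n k) *
    Polynomial.X ^ k *
    ∏ s ∈ Finset.range (n - k), (Polynomial.C (p ^ s) - Polynomial.C (q ^ s) * Polynomial.X)

/-!
At the origin `p ^ s - q ^ s * t` takes the value `p ^ s ≠ 0`, so `B_k^n` vanishes there to order
exactly `k`. Polynomials with pairwise distinct orders of vanishing at the origin are linearly
independent: in a nontrivial linear combination the lowest order term cannot be cancelled. A
dimension count then gives the span.
-/

open Polynomial

theorem linearIndependent_of_injective_trailingDegree {R ι : Type*} [Ring R] [NoZeroDivisors R]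
    {v : ι → R[X]} (hne : ∀ i, v i ≠ 0)
    (hinj : Function.Injective fun i => (v i).trailingDegree) : LinearIndependent R v := by
  rw [linearIndependent_iff]
  intro l hl
  by_contra hl_ne
  obtain ⟨i, hi, hmin⟩ := l.support.exists_min_image (fun i => (v i).trailingDegree)
    (Finsupp.support_nonempty_iff.mpr hl_ne)
  have hcoeff_other (j : ι) (hj : j ∈ l.support) (hji : j ≠ i) :
      (v j).coeff (v i).natTrailingDegree = 0 := by
    apply coeff_eq_zero_of_lt_trailingDegree
    rw [← trailingDegree_eq_natTrailingDegree (hne i)]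
    exact (hmin j hj).lt_of_ne (hinj.ne hji.symm)
  have hlowest : (Finsupp.linearCombination R v l).coeff (v i).natTrailingDegree =
      l i * (v i).trailingCoeff := by
    rw [Finsupp.linearCombination_apply, Finsupp.sum, finsetSum_coeff,
      Finset.sum_eq_single_of_mem i hi, coeff_smul, smul_eq_mul, trailingCoeff]
    intro j hj hji
    rw [coeff_smul, hcoeff_other j hj hji, smul_zero]
  rw [hl, coeff_zero] at hlowest
  exact mul_ne_zero (Finsupp.mem_support_iff.mp hi)
    (trailingCoeff_nonzero_iff_nonzero.mpr (hne i)) hlowest.symm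

theorem span_range_eq_degreeLE_of_card_eq {K ι : Type*} [DivisionRing K] [Fintype ι] {n : ℕ}
    {v : ι → K[X]} (hli : LinearIndependent K v) (hdeg : ∀ i, (v i).natDegree ≤ n)
    (hcard : Fintype.card ι = n + 1) : Submodule.span K (Set.range v) = degreeLE K n := by
  rw [← degreeLT_succ_eq_degreeLE]
  have := (degreeLT.basis K (n + 1)).finiteDimensional_of_finite
  apply Submodule.eq_of_le_of_finrank_eq
  · rw [Submodule.span_le, Set.range_subset_iff]
    exact fun i => mem_degreeLT.mpr
      (degree_le_natDegree.trans_lt (by exact_mod_cast Nat.lt_succ_of_le (hdeg i)))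
  · rw [finrank_span_eq_card hli, hcard, Module.finrank_eq_card_basis (degreeLT.basis K (n + 1)),
      Fintype.card_fin]

/-- The polynomial `(1 ⊖ X)^m_{p,q} = ∏_{s=0}^{m-1} (p^s - q^s X)`, the (p,q)-analogue of
`(1 - X)^m`; the last factor of the (p,q)-Bernstein polynomials. -/
noncomputable def pqOneSubPow {R : Type*} [CommRing R] (p q : R) (m : ℕ) : R[X] :=
  ∏ s ∈ Finset.range m, (C (p ^ s) - C (q ^ s) * X)

theorem coeff_zero_pqOneSubPow {R : Type*} [CommRing R] (p q : R) (m : ℕ) :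
    (pqOneSubPow p q m).coeff 0 = p ^ (m * (m - 1) / 2) := by
  have hfactor (s : ℕ) : (C (p ^ s) - C (q ^ s) * X).coeff 0 = p ^ s := by
    rw [coeff_sub, coeff_C_zero, mul_coeff_zero, coeff_X_zero, mul_zero, sub_zero]
  simp only [pqOneSubPow, coeff_zero_prod, hfactor]
  rw [Finset.prod_pow_eq_pow_sum, Finset.sum_range_id]

theorem natDegree_pqOneSubPow_le {R : Type*} [CommRing R] (p q : R) (m : ℕ) :
    (pqOneSubPow p q m).natDegree ≤ m := by
  have hfactor (s : ℕ) : (C (p ^ s) - C (q ^ s) * X).natDegree ≤ 1 := by compute_degree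
  refine (natDegree_prod_le _ _).trans ?_
  simpa using Finset.sum_le_card_nsmul (Finset.range m) _ 1 fun s _ => hfactor s

section

variable {p q : ℝ}

theorem pqInt_succ_pos (hp : 0 < p) (hq : 0 ≤ q) (n : ℕ) : 0 < pqInt p q (n + 1) := by
  rw [pqInt, Finset.sum_range_succ']
  positivity

theorem pqFact_pos (hp : 0 < p) (hq : 0 ≤ q) (n : ℕ) : 0 < pqFact p q n := by
  induction n with
  | zero => exact one_pos
  | succ n ih => exact mul_pos ih (pqInt_succ_pos hp hq n)

theorem pqFact_ne_zero_of_le {k n : ℕ} (hkn : k ≤ n) (hfact : pqFact p q n ≠ 0) :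
    pqFact p q k ≠ 0 := by
  induction n, hkn using Nat.le_induction with
  | base => exact hfact
  | succ n _ ih => exact ih (left_ne_zero_of_mul hfact)

theorem pqBinom_ne_zero {n k : ℕ} (hkn : k ≤ n) (hfact : pqFact p q n ≠ 0) :
    pqBinom p q n k ≠ 0 :=
  div_ne_zero hfact (mul_ne_zero (pqFact_ne_zero_of_le hkn hfact)
    (pqFact_ne_zero_of_le (n.sub_le k) hfact))

theorem pqBernsteinPoly_eq_mul_pqOneSubPow (p q : ℝ) (n k : ℕ) :
    pqBernsteinPoly p q n k =
      C (p ^ (k * (k - 1) / 2) / p ^ (n * (n - 1) / 2) * pqBinom p q n k) * X ^ k *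
        pqOneSubPow p q (n - k) :=
  rfl

theorem natDegree_pqBernsteinPoly_le {n k : ℕ} (hkn : k ≤ n) :
    (pqBernsteinPoly p q n k).natDegree ≤ n := by
  rw [pqBernsteinPoly_eq_mul_pqOneSubPow]
  exact (natDegree_mul_le_of_le (natDegree_C_mul_X_pow_le _ k)
    (natDegree_pqOneSubPow_le p q (n - k))).trans_eq (Nat.add_sub_cancel' hkn)

theorem trailingDegree_pqBernsteinPoly {n k : ℕ} (hp : p ≠ 0) (hfact : pqFact p q n ≠ 0)
    (hkn : k ≤ n) : (pqBernsteinPoly p q n k).trailingDegree = k := by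
  have hscalar : p ^ (k * (k - 1) / 2) / p ^ (n * (n - 1) / 2) * pqBinom p q n k ≠ 0 :=
    mul_ne_zero (div_ne_zero (pow_ne_zero _ hp) (pow_ne_zero _ hp)) (pqBinom_ne_zero hkn hfact)
  have hcoeff : (pqOneSubPow p q (n - k)).coeff 0 ≠ 0 := by
    rw [coeff_zero_pqOneSubPow]
    exact pow_ne_zero _ hp
  rw [pqBernsteinPoly_eq_mul_pqOneSubPow, trailingDegree_mul,
    trailingDegree_C_mul_X_pow k hscalar, trailingDegree_eq_zero.mpr hcoeff, add_zero]

end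

theorem pqBernstein_basis_general (n : ℕ) (p q : ℝ) (hp : p ≠ 0) (hfact : pqFact p q n ≠ 0) :
    LinearIndependent ℝ (fun k : Fin (n + 1) => pqBernsteinPoly p q n (k : ℕ)) ∧
      Submodule.span ℝ (Set.range (fun k : Fin (n + 1) => pqBernsteinPoly p q n (k : ℕ))) =
        degreeLE ℝ n := by
  have htrail (k : Fin (n + 1)) : (pqBernsteinPoly p q n k).trailingDegree = (k : ℕ) :=
    trailingDegree_pqBernsteinPoly hp hfact k.is_le
  have hne (k : Fin (n + 1)) : pqBernsteinPoly p q n k ≠ 0 :=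
    trailingDegree_eq_top.not.mp (htrail k ▸ ENat.natCast_ne_top k)
  have hinj : Function.Injective fun k : Fin (n + 1) =>
      (pqBernsteinPoly p q n k).trailingDegree := by
    simp only [htrail]
    exact Nat.cast_injective.comp Fin.val_injective
  have hli := linearIndependent_of_injective_trailingDegree hne hinj
  exact ⟨hli, span_range_eq_degreeLE_of_card_eq hli
    (fun k => natDegree_pqBernsteinPoly_le k.is_le) (Fintype.card_fin _)⟩

/-- the (p,q)-Bernstein functions `B_0^n, …, B_n^n` form a basis of the space
of real polynomials of degree at most `n`: they are linearly independent and span it. -/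
theorem pqBernstein_basis (n : ℕ) (hn : 1 ≤ n) (p q : ℝ) (h0 : 0 < q) (hqp : q < p) :
    LinearIndependent ℝ (fun k : Fin (n + 1) => pqBernsteinPoly p q n (k : ℕ)) ∧
      Submodule.span ℝ (Set.range (fun k : Fin (n + 1) => pqBernsteinPoly p q n (k : ℕ))) =
        Polynomial.degreeLE ℝ n :=
  pqBernstein_basis_general n p q (h0.trans hqp).ne' (pqFact_pos (h0.trans hqp) h0.le n).ne'
end
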